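/- Every quasi-isomorphism between minimal Sullivan algebras is an isomorphism of cdga's. -/

import Mathlib

/-! # Core definitions for rational homotopy theory via Sullivan models -/

noncomputable section

open scoped TensorProduct

/-- A commutative (in the graded sense) differential graded algebra over `ℚ`,
presented as a `ℤ`-graded algebra: a ring together with an internal grading by
`ℚ`-subspaces, graded commutativity with Koszul signs, and a degree `+1`
differential which is a derivation and squares to zero. -/
structure CDGA : Type 1 where
  carrier : Type
  [ring : Ring carrier]
  [algebra : Algebra ℚ carrier]
  grading : ℤ → Submodule ℚ carrier
  spanning : (⨆ i, grading i) = ⊤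
  indep : ∀ f : ℤ →₀ carrier, (∀ i, f i ∈ grading i) → (f.sum fun _ x => x) = 0 → f = 0
  one_mem : (1 : carrier) ∈ grading 0
  mul_mem : ∀ {i j : ℤ} {a b : carrier}, a ∈ grading i → b ∈ grading j → a * b ∈ grading (i + j)
  gcomm : ∀ {i j : ℤ} {a b : carrier}, a ∈ grading i → b ∈ grading j →
    a * b = ((-1 : ℚ) ^ (i * j)) • (b * a)
  d : carrier →ₗ[ℚ] carrier
  d_mem : ∀ {i : ℤ} {a : carrier}, a ∈ grading i → d a ∈ grading (i + 1)
  d_sq : ∀ a, d (d a) = 0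
  leibniz : ∀ {i : ℤ} {a : carrier}, a ∈ grading i → ∀ b : carrier,
    d (a * b) = d a * b + ((-1 : ℚ) ^ i) • (a * d b)

attribute [instance] CDGA.ring CDGA.algebra

namespace CDGA

/-- A morphism of cdga's: a ring homomorphism which is `ℚ`-linear, preserves the
grading and commutes with the differentials. -/
structure Hom (A B : CDGA) where
  toFun : A.carrier →+* B.carrier
  map_smul : ∀ (q : ℚ) (x : A.carrier), toFun (q • x) = q • toFun x
  map_grading : ∀ i : ℤ, ∀ x ∈ A.grading i, toFun x ∈ B.grading i
  map_d : ∀ x, toFun (A.d x) = B.d (toFun x)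

def Hom.id (A : CDGA) : Hom A A :=
  ⟨RingHom.id _, fun _ _ => rfl, fun _ _ h => h, fun _ => rfl⟩

def Hom.comp {A B C : CDGA} (g : Hom B C) (f : Hom A B) : Hom A C where
  toFun := g.toFun.comp f.toFun
  map_smul q x := by simp [RingHom.comp_apply, f.map_smul, g.map_smul]
  map_grading i x hx := g.map_grading i _ (f.map_grading i x hx)
  map_d x := by simp [RingHom.comp_apply, f.map_d, g.map_d]

/-- An isomorphism of cdga's. -/
def IsIso {A B : CDGA} (f : Hom A B) : Prop :=
  ∃ g : Hom B A, (∀ x, g.toFun (f.toFun x) = x) ∧ ∀ y, f.toFun (g.toFun y) = y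

def cocycles (A : CDGA) (n : ℤ) : Submodule ℚ A.carrier :=
  A.grading n ⊓ LinearMap.ker A.d

def cobounds (A : CDGA) (n : ℤ) : Submodule ℚ A.carrier :=
  A.grading n ⊓ LinearMap.range A.d

/-- The `n`-th cohomology of a cdga, as a `ℚ`-vector space. -/
def H (A : CDGA) (n : ℤ) : Type :=
  A.cocycles n ⧸ ((A.cobounds n).comap (A.cocycles n).subtype)

instance (A : CDGA) (n : ℤ) : AddCommGroup (A.H n) :=
  inferInstanceAs (AddCommGroup (_ ⧸ _))

instance (A : CDGA) (n : ℤ) : Module ℚ (A.H n) :=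
  inferInstanceAs (Module ℚ (_ ⧸ _))

/-- A quasi-isomorphism: a morphism inducing an isomorphism in cohomology
(expressed at the level of cocycles and coboundaries). -/
def QuasiIso {A B : CDGA} (f : Hom A B) : Prop :=
  (∀ n : ℤ, ∀ a ∈ A.cocycles n, f.toFun a ∈ B.cobounds n → a ∈ A.cobounds n) ∧
  ∀ n : ℤ, ∀ b ∈ B.cocycles n, ∃ a ∈ A.cocycles n, b - f.toFun a ∈ B.cobounds n

/-- `H⁰(A) = ℚ`. -/
def HZeroIsQ (A : CDGA) : Prop :=
  (∀ a ∈ A.cocycles 0, ∃ q : ℚ, a - q • (1 : A.carrier) ∈ A.cobounds 0) ∧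
  (1 : A.carrier) ∉ A.cobounds 0

/-- The cylinder `∧(t,dt) ⊗ A` on a cdga `A`, characterized (up to isomorphism)
as a cdga containing `A` and an element `t` of degree `0` such that the whole
algebra is a free `A`-module on the monomials `tᵏ` and `tᵏ·dt`, together with
the two augmentations `ε₀, ε₁` evaluating `t` at `0` and `1`.  -/
structure Cylinder (A : CDGA) where
  C : CDGA
  ι : Hom A C
  t : C.carrier
  t_mem : t ∈ C.grading 0
  ε₀ : Hom C A
  ε₁ : Hom C A
  ε₀_ι : ∀ a, ε₀.toFun (ι.toFun a) = a
  ε₁_ι : ∀ a, ε₁.toFun (ι.toFun a) = a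
  ε₀_t : ε₀.toFun t = 0
  ε₁_t : ε₁.toFun t = 1
  basis : ∀ c : C.carrier, ∃! pq : (ℕ →₀ A.carrier) × (ℕ →₀ A.carrier),
    c = (pq.1.sum fun k a => ι.toFun a * t ^ k) +
        pq.2.sum fun k a => ι.toFun a * t ^ k * C.d t
  grading_compat : ∀ (n : ℤ) (p q : ℕ →₀ A.carrier),
    (∀ k, p k ∈ A.grading n) → (∀ k, q k ∈ A.grading (n - 1)) →
    ((p.sum fun k a => ι.toFun a * t ^ k) +
      q.sum fun k a => ι.toFun a * t ^ k * C.d t) ∈ C.grading n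

/-- Sullivan's notion of homotopy of cdga morphisms: `f ∼ g` iff there is a
morphism into the cylinder `∧(t,dt) ⊗ A` restricting to `f` at `t = 0` and to
`g` at `t = 1`. -/
def Homotopic {S A : CDGA} (f g : Hom S A) : Prop :=
  ∃ (cy : Cylinder A) (Φ : Hom S cy.C),
    (∀ x, cy.ε₀.toFun (Φ.toFun x) = f.toFun x) ∧ ∀ x, cy.ε₁.toFun (Φ.toFun x) = g.toFun x

def QIso (A B : CDGA) : Prop := ∃ f : Hom A B, QuasiIso f

/-- Weak equivalence of cdga's: a zig-zag of quasi-isomorphisms. -/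
def WeakEq : CDGA → CDGA → Prop := Relation.EqvGen QIso

end CDGA

/-- A Sullivan algebra `(∧V, d)`: a cdga which is free as a graded-commutative
algebra on a graded subspace `V = {V^k}_{k ≥ 1}` (expressed by the universal
property of extending degreewise linear maps on `V` uniquely to graded algebra
morphisms), together with an increasing filtration `V(0) ⊆ V(1) ⊆ ⋯` of `V`
with `d (V(0)) = 0` and `d(V(r+1)) ⊆ ∧V(r)`. -/
structure SullivanAlgebra extends CDGA where
  V : ℤ → Submodule ℚ carrier
  V_le : ∀ k, V k ≤ grading k
  V_nonpos : ∀ k ≤ 0, V k = ⊥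
  gen : Algebra.adjoin ℚ (((⨆ k, V k) : Submodule ℚ carrier) : Set carrier) = ⊤
  free : ∀ (B : CDGA) (f : ∀ k : ℤ, (V k) →ₗ[ℚ] B.carrier),
    (∀ (k : ℤ) (v : V k), f k v ∈ B.grading k) →
    ∃! φ : carrier →+* B.carrier,
      (∀ (q : ℚ) (x : carrier), φ (q • x) = q • φ x) ∧
      (∀ i : ℤ, ∀ x ∈ grading i, φ x ∈ B.grading i) ∧
      ∀ (k : ℤ) (v : V k), φ v = f k v
  filt : ℕ → Submodule ℚ carrier
  filt_le : ∀ r, filt r ≤ ⨆ k, V k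
  filt_mono : Monotone filt
  filt_exhausts : (⨆ k, V k) ≤ ⨆ r, filt r
  d_filt_zero : ∀ x ∈ filt 0, d x = 0
  d_filt_succ : ∀ r : ℕ, ∀ x ∈ filt (r + 1), d x ∈ Algebra.adjoin ℚ ((filt r : Set carrier))

namespace SullivanAlgebra

def Vtot (S : SullivanAlgebra) : Submodule ℚ S.carrier := ⨆ k, S.V k

/-- `∧^{≥ m} V`: the span of the products of at least `m` elements of `V`. -/
def wedge (S : SullivanAlgebra) (m : ℕ) : Submodule ℚ S.carrier :=
  S.Vtot ^ m * ⊤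

end SullivanAlgebra

/-- A minimal Sullivan algebra: `d(V) ⊆ ∧^{≥2} V`. -/
structure MinimalSullivanAlgebra extends SullivanAlgebra where
  minimal : ∀ x ∈ toSullivanAlgebra.Vtot, d x ∈ toSullivanAlgebra.wedge 2
/-! ### Singular cohomology and homology with rational coefficients -/

/-- The standard topological `n`-simplex. -/
def SSimplex (n : ℕ) : Type :=
  {f : Fin (n + 1) → ℝ // (∀ i, 0 ≤ f i) ∧ ∑ i, f i = 1}

instance (n : ℕ) : TopologicalSpace (SSimplex n) := by
  unfold SSimplex; infer_instance

/-- The `i`-th face inclusion of standard simplices. -/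
def SSimplex.face {n : ℕ} (i : Fin (n + 2)) : C(SSimplex n, SSimplex (n + 1)) where
  toFun f := ⟨fun j => ∑ k : Fin (n + 1), if i.succAbove k = j then f.1 k else 0, by
    constructor
    · intro j
      refine Finset.sum_nonneg fun k _ => ?_
      split
      · exact f.2.1 k
      · exact le_rfl
    · rw [Finset.sum_comm]
      have h : ∀ k : Fin (n + 1),
          (∑ j : Fin (n + 2), if i.succAbove k = j then f.1 k else 0) = f.1 k := by
        intro k
        simp [Finset.sum_ite_eq]
      rw [Finset.sum_congr rfl fun k _ => h k]
      exact f.2.2⟩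
  continuous_toFun := by
    apply Continuous.subtype_mk
    apply continuous_pi
    intro j
    apply continuous_finset_sum
    intro k _
    by_cases h : i.succAbove k = j
    · simp only [if_pos h]
      exact (continuous_apply k).comp continuous_subtype_val
    · simpa [h] using continuous_const

/-- Singular simplices in `X`. -/
abbrev SingularSimplex (X : Type) [TopologicalSpace X] (n : ℕ) := C(SSimplex n, X)

/-- Rational singular cochains. -/
abbrev scochain (X : Type) [TopologicalSpace X] (n : ℕ) : Type :=
  SingularSimplex X n → ℚ

/-- The singular coboundary operator. -/
def scoboundary (X : Type) [TopologicalSpace X] (n : ℕ) :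
    scochain X n →ₗ[ℚ] scochain X (n + 1) where
  toFun f := fun σ => ∑ i : Fin (n + 2), (-1 : ℚ) ^ (i : ℕ) * f (σ.comp (SSimplex.face i))
  map_add' f g := by
    funext σ
    simp [mul_add, Finset.sum_add_distrib]
  map_smul' q f := by
    funext σ
    simp [Finset.mul_sum, mul_left_comm]

def scocycles (X : Type) [TopologicalSpace X] (n : ℕ) : Submodule ℚ (scochain X n) :=
  LinearMap.ker (scoboundary X n)

def scobounds (X : Type) [TopologicalSpace X] : (n : ℕ) → Submodule ℚ (scochain X n)
  | 0 => ⊥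
  | n + 1 => LinearMap.range (scoboundary X n)

/-- Rational singular cohomology `H^n(X;ℚ)`. -/
def SingCoh (X : Type) [TopologicalSpace X] (n : ℕ) : Type :=
  scocycles X n ⧸ ((scobounds X n).comap (scocycles X n).subtype)

instance (X : Type) [TopologicalSpace X] (n : ℕ) : AddCommGroup (SingCoh X n) :=
  inferInstanceAs (AddCommGroup (_ ⧸ _))

instance (X : Type) [TopologicalSpace X] (n : ℕ) : Module ℚ (SingCoh X n) :=
  inferInstanceAs (Module ℚ (_ ⧸ _))

/-- Rational singular chains. -/
abbrev schain (X : Type) [TopologicalSpace X] (n : ℕ) := SingularSimplex X n →₀ ℚ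

/-- The singular boundary operator `C_{n+1} → C_n`. -/
def sboundary (X : Type) [TopologicalSpace X] (n : ℕ) :
    schain X (n + 1) →ₗ[ℚ] schain X n :=
  (Finsupp.lift (schain X n) ℚ (SingularSimplex X (n + 1))) fun σ =>
    ∑ i : Fin (n + 2), ((-1 : ℚ) ^ (i : ℕ)) • Finsupp.single (σ.comp (SSimplex.face i)) (1 : ℚ)

def scycles (X : Type) [TopologicalSpace X] : (n : ℕ) → Submodule ℚ (schain X n)
  | 0 => ⊤
  | n + 1 => LinearMap.ker (sboundary X n)

def sbounds (X : Type) [TopologicalSpace X] (n : ℕ) : Submodule ℚ (schain X n) :=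
  LinearMap.range (sboundary X n)

/-- Rational singular homology `H_n(X;ℚ)`. -/
def SingH (X : Type) [TopologicalSpace X] (n : ℕ) : Type :=
  scycles X n ⧸ ((sbounds X n).comap (scycles X n).subtype)

instance (X : Type) [TopologicalSpace X] (n : ℕ) : AddCommGroup (SingH X n) :=
  inferInstanceAs (AddCommGroup (_ ⧸ _))

instance (X : Type) [TopologicalSpace X] (n : ℕ) : Module ℚ (SingH X n) :=
  inferInstanceAs (Module ℚ (_ ⧸ _))

/-! ### Lusternik-Schnirelmann category -/

/-- `U` is contractible in `X`: the inclusion is null-homotopic. -/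
def NullhomotopicIncl {X : Type} [TopologicalSpace X] (U : Set X) : Prop :=
  ∃ x₀ : X, ContinuousMap.Homotopic
    ⟨(Subtype.val : U → X), continuous_subtype_val⟩ (ContinuousMap.const U x₀)

/-- `cat X ≤ m`: `X` is covered by `m+1` open subsets, each contractible in `X`. -/
def catLeSpace (X : Type) [TopologicalSpace X] (m : ℕ) : Prop :=
  ∃ U : Fin (m + 1) → Set X, (∀ i, IsOpen (U i)) ∧ (⋃ i, U i) = Set.univ ∧
    ∀ i, NullhomotopicIncl (U i)

/-- The LS category of a topological space, valued in `ℕ∞`. -/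
def catSpace (X : Type) [TopologicalSpace X] : ℕ∞ :=
  sInf {e : ℕ∞ | ∃ m : ℕ, e = m ∧ catLeSpace X m}

/-- The quotient `(∧V/∧^{>m}V, d̄)` of a Sullivan algebra, characterized as a
surjective cdga morphism with kernel `∧^{> m} V`. -/
structure SullivanAlgebra.LengthQuotient (S : SullivanAlgebra) (m : ℕ) where
  Q : CDGA
  ρ : CDGA.Hom S.toCDGA Q
  surj : Function.Surjective ρ.toFun
  ker : ∀ x : S.carrier, ρ.toFun x = 0 ↔ x ∈ S.wedge (m + 1)

/-- `cat (∧V,d) ≤ m`: there is a morphism `ψ` from a Sullivan model `(∧W,d)` of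
`∧V/∧^{>m}V` into `(∧V,d)` with `ρ ∘ ψ ∼ φ`. -/
def SullivanAlgebra.catLe (S : SullivanAlgebra) (m : ℕ) : Prop :=
  ∃ (LQ : S.LengthQuotient m) (W : SullivanAlgebra) (φ : CDGA.Hom W.toCDGA LQ.Q),
    CDGA.QuasiIso φ ∧ ∃ ψ : CDGA.Hom W.toCDGA S.toCDGA,
      CDGA.Homotopic (LQ.ρ.comp ψ) φ

/-- The LS category of a Sullivan algebra, valued in `ℕ∞`. -/
def SullivanAlgebra.cat (S : SullivanAlgebra) : ℕ∞ :=
  sInf {e : ℕ∞ | ∃ m : ℕ, e = m ∧ S.catLe m}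

/-! ### Sullivan's functor `A_PL` -/

/-- The data of Sullivan's contravariant functor `A_PL` from topological spaces
to rational cdga's: it is functorial, homotopy invariant, concentrated in
non-negative degrees, and its cohomology is (degreewise) isomorphic to rational
singular cohomology. -/
structure APLTheory : Type 1 where
  obj : (X : Type) → TopologicalSpace X → CDGA
  map : {X Y : Type} → (tX : TopologicalSpace X) → (tY : TopologicalSpace Y) →
    C(X, Y) → CDGA.Hom (obj Y tY) (obj X tX)
  map_id : ∀ (X : Type) (tX : TopologicalSpace X) (a : (obj X tX).carrier),
    (map tX tX (ContinuousMap.id X)).toFun a = a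
  map_comp : ∀ {X Y Z : Type} (tX : TopologicalSpace X) (tY : TopologicalSpace Y)
    (tZ : TopologicalSpace Z) (f : C(X, Y)) (g : C(Y, Z)) (a : (obj Z tZ).carrier),
    (map tX tZ (g.comp f)).toFun a = (map tX tY f).toFun ((map tY tZ g).toFun a)
  grading_neg : ∀ (X : Type) (tX : TopologicalSpace X) (n : ℤ), n < 0 →
    (obj X tX).grading n = ⊥
  cohEquiv : ∀ (X : Type) (tX : TopologicalSpace X) (n : ℕ),
    Nonempty (((obj X tX).H n) ≃ₗ[ℚ] @SingCoh X tX n)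
  htpy_invariant : ∀ {X Y : Type} (tX : TopologicalSpace X) (tY : TopologicalSpace Y)
    (f g : C(X, Y)), @ContinuousMap.Homotopic X Y tX tY f g →
    CDGA.Homotopic (map tX tY f) (map tX tY g)

/-- `A` plays the role of `A_PL(X)`: a cdga concentrated in non-negative degrees
whose cohomology is the rational cohomology of `X`. -/
def IsAPLModelOf (A : CDGA) (X : Type) [TopologicalSpace X] : Prop :=
  (∀ n : ℤ, n < 0 → A.grading n = ⊥) ∧
  ∀ n : ℕ, Nonempty (A.H n ≃ₗ[ℚ] SingCoh X n)

/-!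
A quasi-isomorphism `φ` onto a minimal Sullivan algebra `T` has a section, built one generator at a
time by Zorn's lemma. Given a section on a subalgebra containing `d v`, a candidate image for the
generator `v` exists because `φ` is injective in cohomology; it is corrected first by a cocycle,
because `φ` is surjective in cohomology, and then by the differential of a preimage of an element
of degree `deg v - 1`. Such a preimage is available when the section is already defined on all
generators of degree less than `deg v`. Minimality makes this order possible: `d v` lies in
`∧^{≥2} V`, so for degree reasons it involves only generators of degree at most `deg v`, and those
of degree `deg v` have lower filtration. A section of a quasi-isomorphism is again a
quasi-isomorphism, hence has a section itself, and is therefore an isomorphism inverse to `φ`.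
-/

theorem adjoin_le_iSup_of_gradedMonoid {ι R A : Type*} [AddMonoid ι] [CommSemiring R] [Semiring A]
    [Algebra R A] (N : ι → Submodule R A) [SetLike.GradedMonoid N] {s : Set A}
    (hs : s ⊆ (⨆ i, N i : Submodule R A)) :
    (Algebra.adjoin R s).toSubmodule ≤ ⨆ i, N i := by
  classical
  rw [Submodule.iSup_eq_toSubmodule_range] at hs ⊢
  exact Algebra.adjoin_le hs

namespace CDGA

section Grading

variable (A : CDGA)

theorem isInternal_grading : DirectSum.IsInternal A.grading := by
  classical
  refine DirectSum.isInternal_submodule_of_iSupIndep_of_iSup_eq_top ?_ A.spanning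
  refine (iSupIndep_iff_finsetSum_eq_zero_imp_eq_zero _).2 fun s v hv hsum i hi => ?_
  have hzero := A.indep (Finsupp.indicator s fun i _ => v i)
    (fun j => by
      rw [Finsupp.indicator_apply]
      split_ifs with hj
      exacts [hv j hj, zero_mem _])
    (by rwa [Finsupp.sum_indicator_index v fun _ _ => rfl])
  simpa [Finsupp.indicator_apply, hi] using DFunLike.congr_fun hzero i

instance gradedAlgebra : GradedAlgebra A.grading :=
  { A.isInternal_grading.chooseDecomposition with
    one_mem := A.one_mem
    mul_mem := fun _ _ _ _ ha hb => A.mul_mem ha hb }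

/-- The projection of a cdga onto its component of degree `i`. -/
def proj (i : ℤ) : A.carrier →ₗ[ℚ] A.carrier := GradedAlgebra.proj A.grading i

theorem proj_mem (i : ℤ) (x : A.carrier) : A.proj i x ∈ A.grading i :=
  (DirectSum.decompose A.grading x i).2

theorem grading_mul_grading_le (i j : ℤ) : A.grading i * A.grading j ≤ A.grading (i + j) :=
  Submodule.mul_le.2 fun _ ha _ hb => A.mul_mem ha hb

theorem d_algebraMap (q : ℚ) : A.d (algebraMap ℚ A.carrier q) = 0 := by
  have hd_one : A.d 1 = 0 := by simpa using A.leibniz A.one_mem 1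
  rw [Algebra.algebraMap_eq_smul_one, map_smul, hd_one, smul_zero]

variable {A}

theorem proj_of_mem {i : ℤ} {x : A.carrier} (hx : x ∈ A.grading i) : A.proj i x = x :=
  DirectSum.decompose_of_mem_same _ hx

theorem proj_of_mem_ne {i j : ℤ} {x : A.carrier} (hx : x ∈ A.grading i) (hij : i ≠ j) :
    A.proj j x = 0 :=
  DirectSum.decompose_of_mem_ne _ hx hij

theorem mem_of_forall_proj_mem {M : Submodule ℚ A.carrier} {x : A.carrier}
    (h : ∀ i, A.proj i x ∈ M) : x ∈ M := by
  classical
  rw [← DirectSum.sum_support_decompose A.grading x]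
  exact sum_mem fun i _ => h i

theorem proj_mem_of_mem_iSup {ι : Sort*} {G : ι → Submodule ℚ A.carrier} {deg : ι → ℤ}
    (hG : ∀ i, G i ≤ A.grading (deg i)) {m : ℤ} {M : Submodule ℚ A.carrier}
    (hM : ∀ i, deg i = m → G i ≤ M) {x : A.carrier} (hx : x ∈ ⨆ i, G i) : A.proj m x ∈ M := by
  refine (iSup_le fun i y hy => ?_ : ⨆ i, G i ≤ M.comap (A.proj m)) hx
  rw [Submodule.mem_comap]
  by_cases hi : deg i = m
  · rw [proj_of_mem (hi ▸ hG i hy)]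
    exact hM i hi hy
  · rw [proj_of_mem_ne (hG i hy) hi]
    exact zero_mem _

theorem proj_mem_of_mem_iSup_of_le {G : ℤ → Submodule ℚ A.carrier} (hG : ∀ i, G i ≤ A.grading i)
    {x : A.carrier} (hx : x ∈ ⨆ i, G i) (m : ℤ) : A.proj m x ∈ G m :=
  proj_mem_of_mem_iSup hG (by rintro _ rfl; exact le_rfl) hx

theorem proj_mem_adjoin_iSup {G : ℤ → Submodule ℚ A.carrier} (hG : ∀ i, G i ≤ A.grading i)
    {x : A.carrier} (hx : x ∈ Algebra.adjoin ℚ ((⨆ i, G i : Submodule ℚ A.carrier) : Set A.carrier))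
    (m : ℤ) :
    A.proj m x ∈ Algebra.adjoin ℚ ((⨆ i, G i : Submodule ℚ A.carrier) : Set A.carrier) := by
  set S := Algebra.adjoin ℚ ((⨆ i, G i : Submodule ℚ A.carrier) : Set A.carrier)
  let N : ℤ → Submodule ℚ A.carrier := fun m => S.toSubmodule ⊓ A.grading m
  have : SetLike.GradedMonoid N :=
    { one_mem := ⟨S.one_mem, A.one_mem⟩
      mul_mem := fun _ _ _ _ hx hy => ⟨S.mul_mem hx.1 hy.1, A.mul_mem hx.2 hy.2⟩ }
  have hGN : ⨆ i, G i ≤ ⨆ i, N i := iSup_mono fun i y hy =>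
    ⟨Algebra.subset_adjoin (Submodule.mem_iSup_of_mem i hy), hG i hy⟩
  exact (proj_mem_of_mem_iSup_of_le (fun _ => inf_le_right)
    (adjoin_le_iSup_of_gradedMonoid N hGN hx) m).1

theorem proj_map {B : CDGA} (L : A.carrier →ₗ[ℚ] B.carrier) (c : ℤ)
    (hL : ∀ i, ∀ x ∈ A.grading i, L x ∈ B.grading (i + c)) (i : ℤ) (x : A.carrier) :
    B.proj (i + c) (L x) = L (A.proj i x) := by
  have hx : x ∈ ⨆ i, A.grading i := A.spanning ▸ Submodule.mem_top
  induction hx using Submodule.iSup_induction' with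
  | mem j x hx =>
    by_cases hij : j = i
    · subst hij
      rw [proj_of_mem hx, proj_of_mem (hL _ _ hx)]
    · rw [proj_of_mem_ne hx hij, proj_of_mem_ne (hL _ _ hx) (by simpa using hij), map_zero]
  | zero => simp
  | add x y _ _ hx hy => simp [hx, hy]

theorem proj_d (i : ℤ) (x : A.carrier) : A.proj (i + 1) (A.d x) = A.d (A.proj i x) :=
  proj_map A.d 1 (fun _ _ h => A.d_mem h) i x

theorem mem_cobounds_add_one_iff {n : ℤ} {x : A.carrier} :
    x ∈ A.cobounds (n + 1) ↔ ∃ y ∈ A.grading n, A.d y = x := by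
  constructor
  · rintro ⟨hx, y, rfl⟩
    exact ⟨A.proj n y, A.proj_mem n y, by rw [← proj_d, proj_of_mem hx]⟩
  · rintro ⟨y, hy, rfl⟩
    exact ⟨A.d_mem hy, y, rfl⟩

theorem mem_cocycles {n : ℤ} {x : A.carrier} :
    x ∈ A.cocycles n ↔ x ∈ A.grading n ∧ A.d x = 0 :=
  Iff.rfl

end Grading

section QuasiIso

variable {A B : CDGA} {f : Hom A B}

theorem Hom.map_mem_cocycles (f : Hom A B) {n : ℤ} {a : A.carrier} (ha : a ∈ A.cocycles n) :
    f.toFun a ∈ B.cocycles n :=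
  mem_cocycles.2 ⟨f.map_grading n a ha.1, by rw [← f.map_d, (mem_cocycles.1 ha).2, map_zero]⟩

theorem Hom.map_mem_cobounds (f : Hom A B) {n : ℤ} {a : A.carrier} (ha : a ∈ A.cobounds n) :
    f.toFun a ∈ B.cobounds n := by
  obtain ⟨han, y, rfl⟩ := ha
  exact ⟨f.map_grading n _ han, f.toFun y, (f.map_d y).symm⟩

theorem QuasiIso.of_rightInverse (hf : QuasiIso f) {g : Hom B A}
    (hfg : ∀ y, f.toFun (g.toFun y) = y) : QuasiIso g := by
  refine ⟨fun n b _ hgb => hfg b ▸ f.map_mem_cobounds hgb, fun n a ha => ?_⟩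
  have hfa := f.map_mem_cocycles ha
  refine ⟨f.toFun a, hfa, hf.1 n _ (sub_mem ha (g.map_mem_cocycles hfa)) ?_⟩
  rw [map_sub, hfg, sub_self]
  exact zero_mem _

theorem QuasiIso.exists_lift (hf : QuasiIso f) {n : ℤ}
    (hsurj : ∀ t ∈ B.grading n, ∃ x ∈ A.grading n, f.toFun x = t)
    {b : B.carrier} (hb : b ∈ B.grading (n + 1)) {a : A.carrier}
    (ha : a ∈ A.cocycles (n + 1 + 1)) (hab : f.toFun a = B.d b) :
    ∃ s ∈ A.grading (n + 1), A.d s = a ∧ f.toFun s = b := by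
  obtain ⟨s₀, hs₀, rfl⟩ := mem_cobounds_add_one_iff.1
    (hf.1 _ a ha (mem_cobounds_add_one_iff.2 ⟨b, hb, hab.symm⟩))
  have hcocycle : b - f.toFun s₀ ∈ B.cocycles (n + 1) :=
    mem_cocycles.2 ⟨sub_mem hb (f.map_grading _ _ hs₀), by rw [map_sub, ← f.map_d, hab, sub_self]⟩
  obtain ⟨z, hz, hzb⟩ := hf.2 _ _ hcocycle
  obtain ⟨t, ht, hdt⟩ := mem_cobounds_add_one_iff.1 hzb
  obtain ⟨x, hx, rfl⟩ := hsurj t ht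
  refine ⟨s₀ + z + A.d x, add_mem (add_mem hs₀ hz.1) (A.d_mem hx), ?_, ?_⟩
  · rw [map_add, map_add, (mem_cocycles.1 hz).2, A.d_sq, add_zero, add_zero]
  · rw [map_add, map_add, f.map_d, hdt]
    abel

end QuasiIso

section GradedAlgHom

variable {A B : CDGA}

/-- The subalgebra on which a morphism of graded algebras commutes with the differentials. -/
def dEqualizer (ψ : A.grading →ₐᵍ[ℚ] B.grading) : Subalgebra ℚ A.carrier where
  carrier := {x | B.d (ψ x) = ψ (A.d x)}
  add_mem' {x y} hx hy := by
    simp only [Set.mem_ofPred_eq, map_add] at *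
    rw [hx, hy]
  algebraMap_mem' q := by
    rw [Set.mem_ofPred_eq, AlgHomClass.commutes, d_algebraMap, d_algebraMap, map_zero]
  mul_mem' {x y} hx hy := by
    -- Leibniz needs a homogeneous left factor, so `x` is replaced by its components.
    let D : A.carrier →ₗ[ℚ] B.carrier :=
      B.d ∘ₗ ψ.toAlgHom.toLinearMap - ψ.toAlgHom.toLinearMap ∘ₗ A.d
    have hD : ∀ z, D z = 0 ↔ B.d (ψ z) = ψ (A.d z) := fun z => sub_eq_zero
    have hD_mem : ∀ i, ∀ z ∈ A.grading i, D z ∈ B.grading (i + 1) := fun i z hz =>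
      sub_mem (B.d_mem (Graded.map_mem ψ hz)) (Graded.map_mem ψ (A.d_mem hz))
    have hy : B.d (ψ y) = ψ (A.d y) := hy
    change B.d (ψ (x * y)) = ψ (A.d (x * y))
    rw [← hD]
    change x ∈ LinearMap.ker (D ∘ₗ LinearMap.mulRight ℚ y)
    refine mem_of_forall_proj_mem fun i => ?_
    have hxi : B.d (ψ (A.proj i x)) = ψ (A.d (A.proj i x)) := by
      rw [← hD, ← proj_map D 1 hD_mem, (hD x).2 hx, map_zero]
    have hmem := A.proj_mem i x
    change D (A.proj i x * y) = 0
    rw [hD, map_mul, A.leibniz hmem, B.leibniz (Graded.map_mem ψ hmem), hxi, hy]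
    simp only [map_add, map_mul, map_smul]

end GradedAlgHom

end CDGA

open CDGA

namespace SullivanAlgebra

/-- `V^{≤n}`, the space of generators of degree at most `n`. -/
def genLE (T : SullivanAlgebra) (n : ℤ) : Submodule ℚ T.carrier := ⨆ k ≤ n, T.V k

variable {T : SullivanAlgebra}

theorem V_le_genLE {k n : ℤ} (hkn : k ≤ n) : T.V k ≤ T.genLE n :=
  le_iSup₂_of_le k hkn le_rfl

theorem genLE_mono : Monotone T.genLE := fun _ _ hmn =>
  iSup₂_le fun _ hk => V_le_genLE (hk.trans hmn)

theorem exists_gradedAlgHom (T : SullivanAlgebra) {A : CDGA} (f : ∀ k, T.V k →ₗ[ℚ] A.grading k) :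
    ∃ ψ : T.grading →ₐᵍ[ℚ] A.grading, ∀ k (v : T.V k), ψ v = f k v := by
  obtain ⟨ψ, ⟨-, hψ, hψV⟩, -⟩ :=
    T.free A (fun k => (A.grading k).subtype ∘ₗ f k) fun k v => (f k v).2
  exact ⟨⟨ψ.toRatAlgHom, fun {i x} hx => hψ i x hx⟩, hψV⟩

theorem iSup_adjoin_genLE_inf_grading :
    ⨆ m : ℕ, (Algebra.adjoin ℚ (T.genLE m : Set T.carrier)).toSubmodule ⊓ T.grading m = ⊤ := by
  set N : ℕ → Submodule ℚ T.carrier := fun m =>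
    (Algebra.adjoin ℚ (T.genLE m : Set T.carrier)).toSubmodule ⊓ T.grading m
  have adjoin_mono : ∀ {i j : ℕ}, i ≤ j → Algebra.adjoin ℚ (T.genLE i : Set T.carrier) ≤
      Algebra.adjoin ℚ (T.genLE j : Set T.carrier) := fun hij =>
    Algebra.adjoin_mono (genLE_mono (Int.ofNat_le.2 hij))
  have : SetLike.GradedMonoid N :=
    { one_mem := ⟨Subalgebra.one_mem _, T.one_mem⟩
      mul_mem := fun i j _ _ hx hy =>
        ⟨Subalgebra.mul_mem _ (adjoin_mono (i.le_add_right j) hx.1)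
          (adjoin_mono (j.le_add_left i) hy.1),
        (Nat.cast_add (R := ℤ) i j) ▸ T.mul_mem hx.2 hy.2⟩ }
  have hVN : ⨆ k, T.V k ≤ ⨆ m, N m := by
    refine iSup_le fun k v hv => ?_
    rcases le_or_gt k 0 with hk | hk
    · rw [T.V_nonpos k hk, Submodule.mem_bot] at hv
      exact hv ▸ zero_mem _
    · lift k to ℕ using hk.le
      exact Submodule.mem_iSup_of_mem k
        ⟨Algebra.subset_adjoin (V_le_genLE le_rfl hv), T.V_le k hv⟩
  rw [eq_top_iff, ← Algebra.top_toSubmodule, ← T.gen]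
  exact adjoin_le_iSup_of_gradedMonoid N hVN

theorem grading_le_adjoin_genLE (n : ℤ) :
    T.grading n ≤ (Algebra.adjoin ℚ (T.genLE n : Set T.carrier)).toSubmodule := fun x hx => by
  rw [← proj_of_mem hx]
  refine proj_mem_of_mem_iSup (A := T.toCDGA) (deg := Nat.cast) (fun _ => inf_le_right) ?_
    (iSup_adjoin_genLE_inf_grading (T := T) ▸ Submodule.mem_top)
  rintro m rfl
  exact inf_le_left

theorem grading_eq_bot_of_neg {n : ℤ} (hn : n < 0) : T.grading n = ⊥ := by
  refine eq_bot_iff.2 fun x hx => ?_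
  rw [← proj_of_mem hx]
  exact proj_mem_of_mem_iSup (A := T.toCDGA) (deg := Nat.cast) (fun _ => inf_le_right)
    (fun m hm => absurd hm (by omega)) (iSup_adjoin_genLE_inf_grading (T := T) ▸ Submodule.mem_top)

theorem wedge_two_le_iSup :
    T.wedge 2 ≤ ⨆ i : ℤ × ℤ × ℤ, T.V i.1 * T.V i.2.1 * T.grading i.2.2 := by
  rw [wedge, ← T.spanning]
  simp only [Vtot, pow_two, Submodule.iSup_mul, Submodule.mul_iSup]
  exact iSup_le fun m => iSup_le fun l => iSup_le fun k =>
    le_iSup (fun i : ℤ × ℤ × ℤ => T.V i.1 * T.V i.2.1 * T.grading i.2.2) (k, l, m)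

theorem V_mul_V_mul_grading_le (k l m : ℤ) :
    T.V k * T.V l * T.grading m ≤ T.grading (k + l + m) :=
  (mul_le_mul_left (mul_le_mul' (T.V_le k) (T.V_le l)) _).trans
    ((mul_le_mul_left (T.grading_mul_grading_le k l) _).trans (T.grading_mul_grading_le _ m))

theorem mem_adjoin_genLE_of_mem_wedge_two {n : ℤ} {x : T.carrier} (hx : x ∈ T.grading (n + 1))
    (hxw : x ∈ T.wedge 2) : x ∈ Algebra.adjoin ℚ (T.genLE n : Set T.carrier) := by
  set S := Algebra.adjoin ℚ (T.genLE n : Set T.carrier)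
  have hVS : ∀ k ≤ n, T.V k ≤ S.toSubmodule := fun k hk _ hv =>
    Algebra.subset_adjoin (V_le_genLE hk hv)
  have hgradingS : ∀ m ≤ n, T.grading m ≤ S.toSubmodule := fun m hm =>
    (grading_le_adjoin_genLE m).trans (Algebra.adjoin_mono (genLE_mono hm))
  have hmul : ∀ {M N : Submodule ℚ T.carrier}, M ≤ S.toSubmodule → N ≤ S.toSubmodule →
      M * N ≤ S.toSubmodule := fun hM hN =>
    Submodule.mul_le.2 fun _ ha _ hb => S.mul_mem (hM ha) (hN hb)
  rw [← proj_of_mem hx]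
  refine proj_mem_of_mem_iSup (A := T.toCDGA) (M := S.toSubmodule)
    (deg := fun i : ℤ × ℤ × ℤ => i.1 + i.2.1 + i.2.2)
    (fun i => V_mul_V_mul_grading_le i.1 i.2.1 i.2.2) ?_ (wedge_two_le_iSup hxw)
  rintro ⟨k, l, m⟩ (hdeg : k + l + m = n + 1)
  rcases le_or_gt k 0 with hk | hk
  · simp [T.V_nonpos k hk]
  rcases le_or_gt l 0 with hl | hl
  · simp [T.V_nonpos l hl]
  rcases lt_or_ge m 0 with hm | hm
  · simp [grading_eq_bot_of_neg hm]
  · exact hmul (hmul (hVS k (by omega)) (hVS l (by omega))) (hgradingS m (by omega))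

theorem proj_mem_V_of_mem_filt {r : ℕ} {x : T.carrier} (hx : x ∈ T.filt r) (k : ℤ) :
    T.proj k x ∈ T.V k :=
  proj_mem_of_mem_iSup_of_le (A := T.toCDGA) T.V_le (T.filt_le r hx) k

theorem exists_mem_filt {v : T.carrier} (hv : v ∈ T.Vtot) : ∃ r, v ∈ T.filt r :=
  (Submodule.mem_iSup_of_directed _ T.filt_mono.directed_le).1 (T.filt_exhausts hv)

theorem exists_truncation (T : SullivanAlgebra) (n : ℤ) :
    ∃ θ : T.grading →ₐᵍ[ℚ] T.grading, (∀ k ≤ n, ∀ v ∈ T.V k, θ v = v) ∧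
      ∀ k > n, ∀ v ∈ T.V k, θ v = 0 := by
  obtain ⟨θ, hθ⟩ := T.exists_gradedAlgHom (A := T.toCDGA) fun k =>
    if k ≤ n then Submodule.inclusion (T.V_le k) else 0
  refine ⟨θ, fun k hk v hv => ?_, fun k hk v hv => ?_⟩
  · simpa [hk] using hθ k ⟨v, hv⟩
  · simpa [hk.not_ge] using hθ k ⟨v, hv⟩

theorem mem_adjoin_iSup_le_of_mem_adjoin_genLE {F : ℤ → Submodule ℚ T.carrier}
    (hF : ∀ j, F j ≤ T.V j) {n : ℤ} {x : T.carrier}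
    (hxF : x ∈ Algebra.adjoin ℚ ((⨆ j, F j : Submodule ℚ T.carrier) : Set T.carrier))
    (hxn : x ∈ Algebra.adjoin ℚ (T.genLE n : Set T.carrier)) :
    x ∈ Algebra.adjoin ℚ ((⨆ j ≤ n, F j : Submodule ℚ T.carrier) : Set T.carrier) := by
  obtain ⟨θ, hθ_le, hθ_gt⟩ := T.exists_truncation n
  have hθx : θ x = x := by
    have hle : T.genLE n ≤ (AlgHom.equalizer θ.toAlgHom (AlgHom.id ℚ _)).toSubmodule :=
      iSup₂_le hθ_le
    exact Algebra.adjoin_le (S := AlgHom.equalizer θ.toAlgHom (AlgHom.id ℚ _)) hle hxn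
  set S := Algebra.adjoin ℚ ((⨆ j ≤ n, F j : Submodule ℚ T.carrier) : Set T.carrier)
  have hFS : ⨆ j, F j ≤ (S.comap θ.toAlgHom).toSubmodule := by
    refine iSup_le fun j v hv => ?_
    change θ v ∈ S
    rcases le_or_gt j n with hj | hj
    · rw [hθ_le j hj v (hF j hv)]
      exact Algebra.subset_adjoin (le_iSup₂ (f := fun j (_ : j ≤ n) => F j) j hj hv)
    · rw [hθ_gt j hj v (hF j hv)]
      exact S.zero_mem
  rw [← hθx]
  exact Algebra.adjoin_le (S := S.comap θ.toAlgHom) hFS hxF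

end SullivanAlgebra

namespace MinimalSullivanAlgebra

open SullivanAlgebra

variable {T : MinimalSullivanAlgebra}

theorem d_proj_mem_adjoin {r : ℕ} {x : T.carrier} (hx : x ∈ T.filt (r + 1)) (n : ℤ) :
    T.d (T.proj n x) ∈ Algebra.adjoin ℚ
      ((⨆ j ≤ n, (T.filt r).map (T.proj j) : Submodule ℚ T.carrier) : Set T.carrier) := by
  have hF : ∀ j, (T.filt r).map (T.proj j) ≤ T.V j := fun j =>
    Submodule.map_le_iff_le_comap.2 fun _ hy => proj_mem_V_of_mem_filt hy j
  have hfilt : T.filt r ≤ ⨆ j, (T.filt r).map (T.proj j) := fun y hy =>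
    mem_of_forall_proj_mem (A := T.toCDGA) fun j =>
      Submodule.mem_iSup_of_mem j (Submodule.mem_map_of_mem hy)
  refine mem_adjoin_iSup_le_of_mem_adjoin_genLE hF ?_ ?_
  · rw [← proj_d]
    exact proj_mem_adjoin_iSup (A := T.toCDGA) (fun j => (hF j).trans (T.V_le j))
      (Algebra.adjoin_mono hfilt (T.d_filt_succ r x hx)) (n + 1)
  · exact mem_adjoin_genLE_of_mem_wedge_two (T.d_mem (T.proj_mem n x))
      (T.minimal _ (Submodule.mem_iSup_of_mem n (proj_mem_V_of_mem_filt hx n)))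

theorem Vtot_le_of_forall_d_mem_adjoin {E : Submodule ℚ T.carrier}
    (hE : ∀ n, T.genLE n ≤ E → ∀ v ∈ T.V (n + 1),
      T.d v ∈ Algebra.adjoin ℚ (E : Set T.carrier) → v ∈ E) : T.Vtot ≤ E := by
  have hfilt : ∀ n, T.genLE n ≤ E → ∀ r, ∀ x ∈ T.filt r, T.proj (n + 1) x ∈ E := by
    intro n hn r
    induction r with
    | zero =>
      intro x hx
      refine hE n hn _ (proj_mem_V_of_mem_filt hx _) ?_
      rw [← proj_d, T.d_filt_zero x hx, map_zero]
      exact zero_mem _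
    | succ r ih =>
      intro x hx
      refine hE n hn _ (proj_mem_V_of_mem_filt hx _)
        (Algebra.adjoin_mono ?_ (d_proj_mem_adjoin hx _))
      refine iSup₂_le fun j hj => Submodule.map_le_iff_le_comap.2 fun y hy => ?_
      rcases hj.eq_or_lt with rfl | hj
      · exact ih y hy
      · exact hn (V_le_genLE (Int.lt_add_one_iff.1 hj) (proj_mem_V_of_mem_filt hy j))
  have hgen : ∀ n : ℕ, T.genLE n ≤ E := by
    intro n
    induction n with
    | zero => exact iSup₂_le fun k hk => (T.V_nonpos k hk).trans_le bot_le
    | succ n ih =>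
      refine iSup₂_le fun k hk v hv => ?_
      rcases hk.eq_or_lt with rfl | hk
      · obtain ⟨r, hr⟩ := exists_mem_filt (Submodule.mem_iSup_of_mem _ hv)
        exact proj_of_mem (A := T.toCDGA) (T.V_le _ hv) ▸ hfilt n ih r v hr
      · exact ih (V_le_genLE (Int.lt_add_one_iff.1 hk) hv)
  exact iSup_le fun k => (V_le_genLE k.self_le_toNat).trans (hgen k.toNat)

end MinimalSullivanAlgebra

/-- A degree-preserving linear map into `A`, defined on a graded subspace of the space `V` of
generators of `T`. It is encoded degreewise, so that the order on `LinearPMap`s makes such maps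
into a partial order. -/
abbrev PartialLift (T : SullivanAlgebra) (A : CDGA) : Type :=
  ∀ k, T.V k →ₗ.[ℚ] A.grading k

namespace PartialLift

variable {T : SullivanAlgebra} {A : CDGA}

/-- The graded subspace of `V` on which a partial lift is defined. -/
def domain (p : PartialLift T A) : Submodule ℚ T.carrier :=
  ⨆ k, (p k).domain.map (T.V k).subtype

/-- A morphism of graded algebras, not required to commute with the differentials, that extends
the partial lift `p` to `T`. -/
def IsExtension (p : PartialLift T A) (ψ : T.grading →ₐᵍ[ℚ] A.grading) : Prop :=
  ∀ k, ∀ u : (p k).domain, ψ u = p k u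

theorem mem_domain {p : PartialLift T A} {k : ℤ} {v : T.V k} (hv : v ∈ (p k).domain) :
    (v : T.carrier) ∈ p.domain :=
  Submodule.mem_iSup_of_mem k (Submodule.mem_map_of_mem hv)

theorem domain_le_iff {p : PartialLift T A} {M : Submodule ℚ T.carrier} :
    p.domain ≤ M ↔ ∀ k, ∀ v ∈ (p k).domain, (v : T.carrier) ∈ M := by
  simp only [domain, iSup_le_iff, Submodule.map_le_iff_le_comap]
  rfl

theorem domain_mono : Monotone (domain : PartialLift T A → Submodule ℚ T.carrier) :=
  fun _ _ hpq => domain_le_iff.2 fun k _ hv => mem_domain ((hpq k).1 hv)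

theorem domain_bot : (⊥ : PartialLift T A).domain = ⊥ := by
  refine eq_bot_iff.2 (domain_le_iff.2 fun k v hv => ?_)
  rw [(Submodule.mem_bot ℚ).1 hv]
  exact zero_mem _

theorem exists_isExtension (p : PartialLift T A) : ∃ ψ, p.IsExtension ψ := by
  choose f hf using fun k => LinearMap.exists_extend (p k).toFun
  obtain ⟨ψ, hψ⟩ := T.exists_gradedAlgHom f
  refine ⟨ψ, fun k u => ?_⟩
  rw [hψ k u]
  exact congrArg Subtype.val (LinearMap.congr_fun (hf k) u)

theorem IsExtension.of_le {p q : PartialLift T A} {ψ : T.grading →ₐᵍ[ℚ] A.grading}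
    (hψ : q.IsExtension ψ) (hpq : p ≤ q) : p.IsExtension ψ := fun k u => by
  rw [(hpq k).2 (y := Submodule.inclusion (hpq k).1 u) rfl]
  exact hψ k (Submodule.inclusion (hpq k).1 u)

theorem IsExtension.eq_of_mem_adjoin {p : PartialLift T A} {ψ χ : T.grading →ₐᵍ[ℚ] A.grading}
    (hψ : p.IsExtension ψ) (hχ : p.IsExtension χ) {t : T.carrier}
    (ht : t ∈ Algebra.adjoin ℚ (p.domain : Set T.carrier)) : ψ t = χ t := by
  have hle : p.domain ≤ (AlgHom.equalizer ψ.toAlgHom χ.toAlgHom).toSubmodule :=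
    domain_le_iff.2 fun k v hv => (hψ k ⟨v, hv⟩).trans (hχ k ⟨v, hv⟩).symm
  exact Algebra.adjoin_le (S := AlgHom.equalizer ψ.toAlgHom χ.toAlgHom) hle ht

theorem exists_upperBound_domain_le {c : Set (PartialLift T A)} (hne : c.Nonempty)
    (hc : DirectedOn (· ≤ ·) c) : ∃ q, (∀ p ∈ c, p ≤ q) ∧ q.domain ≤ ⨆ p ∈ c, p.domain := by
  have hdir : ∀ k, DirectedOn (· ≤ ·) (Function.eval k '' c) := fun k =>
    directedOn_image.2 (hc.mono fun {_ _} hpq => hpq k)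
  refine ⟨fun k => LinearPMap.sSup _ (hdir k), fun p hp k =>
    LinearPMap.le_sSup (hdir k) (Set.mem_image_of_mem _ hp), domain_le_iff.2 fun k v hv => ?_⟩
  obtain ⟨_, ⟨p, hp, rfl⟩, hvp⟩ := (LinearPMap.mem_domain_sSup_iff (hne.image _) (hdir k)).1 hv
  exact le_iSup₂ (f := fun p (_ : p ∈ c) => domain p) p hp (mem_domain hvp)

theorem exists_extend_generator (p : PartialLift T A) {n : ℤ} {v : T.V n} (hv : v ∉ (p n).domain)
    (s : A.grading n) :
    ∃ q, p ≤ q ∧ q.domain = p.domain ⊔ ℚ ∙ (v : T.carrier) ∧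
      ∀ ψ, q.IsExtension ψ → ψ v = s := by
  let q : PartialLift T A := Function.update p n ((p n).supSpanSingleton v s hv)
  have hqn : q n = (p n).supSpanSingleton v s hv := Function.update_self ..
  have hpq : p ≤ q := le_update_self_iff.2 (LinearPMap.left_le_sup ..)
  have hvq : v ∈ (q n).domain :=
    hqn ▸ Submodule.mem_sup_right (Submodule.mem_span_singleton_self v)
  refine ⟨q, hpq, le_antisymm (domain_le_iff.2 fun k u hu => ?_) (sup_le (domain_mono hpq) ?_),
    fun ψ hψ => ?_⟩
  · rcases eq_or_ne k n with rfl | hk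
    · rw [hqn] at hu
      obtain ⟨y, hy, w, hw, rfl⟩ := Submodule.mem_sup.1 hu
      obtain ⟨c, rfl⟩ := Submodule.mem_span_singleton.1 hw
      exact add_mem (Submodule.mem_sup_left (mem_domain hy))
        (Submodule.mem_sup_right (Submodule.smul_mem _ c (Submodule.mem_span_singleton_self _)))
    · rw [show q k = p k from Function.update_of_ne hk ..] at hu
      exact Submodule.mem_sup_left (mem_domain hu)
  · exact (Submodule.span_singleton_le_iff_mem _ _).2 (mem_domain hvq)
  · have hψn := hψ n
    rw [hqn] at hψn
    exact (hψn ⟨v, hqn ▸ hvq⟩).trans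
      (congrArg Subtype.val (LinearPMap.supSpanSingleton_apply_self (p n) s hv))

end PartialLift

/-- The subalgebra on which `ψ` commutes with the differentials and is a section of `φ`. -/
def CDGA.sectionLocus {A B : CDGA} (φ : Hom A B) (ψ : B.grading →ₐᵍ[ℚ] A.grading) :
    Subalgebra ℚ B.carrier :=
  dEqualizer ψ ⊓ AlgHom.equalizer (φ.toFun.toRatAlgHom.comp ψ.toAlgHom) (AlgHom.id ℚ _)

theorem CDGA.mem_sectionLocus {A B : CDGA} {φ : Hom A B} {ψ : B.grading →ₐᵍ[ℚ] A.grading}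
    {x : B.carrier} : x ∈ sectionLocus φ ψ ↔ A.d (ψ x) = ψ (B.d x) ∧ φ.toFun (ψ x) = x :=
  Iff.rfl

/-- A partial lift defining a section of `φ` compatible with the differentials. As `d` maps
generators to polynomials in generators, compatibility is expressed through the extensions of the
partial lift to algebra morphisms. -/
def IsPartialSection {T : SullivanAlgebra} {A : CDGA} (φ : Hom A T.toCDGA) (p : PartialLift T A) :
    Prop :=
  ∀ ψ, p.IsExtension ψ → p.domain ≤ (sectionLocus φ ψ).toSubmodule

namespace IsPartialSection

variable {T : SullivanAlgebra} {A : CDGA} {φ : Hom A T.toCDGA} {p : PartialLift T A}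

theorem adjoin_le_sectionLocus (hp : IsPartialSection φ p) {ψ : T.grading →ₐᵍ[ℚ] A.grading}
    (hψ : p.IsExtension ψ) :
    Algebra.adjoin ℚ (p.domain : Set T.carrier) ≤ sectionLocus φ ψ :=
  Algebra.adjoin_le (hp ψ hψ)

theorem bot (φ : Hom A T.toCDGA) : IsPartialSection φ ⊥ := fun _ _ =>
  PartialLift.domain_bot.trans_le bot_le

theorem exists_upperBound {c : Set (PartialLift T A)} (hne : c.Nonempty)
    (hc : DirectedOn (· ≤ ·) c) (h : ∀ p ∈ c, IsPartialSection φ p) :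
    ∃ q, IsPartialSection φ q ∧ ∀ p ∈ c, p ≤ q := by
  obtain ⟨q, hq, hdom⟩ := PartialLift.exists_upperBound_domain_le hne hc
  exact ⟨q, fun ψ hψ => hdom.trans (iSup₂_le fun p hp => h p hp ψ (hψ.of_le (hq p hp))), hq⟩

theorem exists_le_mem_domain (hp : IsPartialSection φ p) (hφ : QuasiIso φ) {n : ℤ}
    (hn : T.genLE n ≤ p.domain) {v : T.carrier} (hv : v ∈ T.V (n + 1))
    (hdv : T.d v ∈ Algebra.adjoin ℚ (p.domain : Set T.carrier)) :
    ∃ q, p ≤ q ∧ IsPartialSection φ q ∧ v ∈ q.domain := by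
  lift v to T.V (n + 1) using hv
  by_cases hvp : v ∈ (p (n + 1)).domain
  · exact ⟨p, le_rfl, hp, PartialLift.mem_domain hvp⟩
  obtain ⟨ψ, hψ⟩ := p.exists_isExtension
  have hlocus := hp.adjoin_le_sectionLocus hψ
  obtain ⟨hdψ, hφψ⟩ := mem_sectionLocus.1 (hlocus hdv)
  have hvn := T.V_le _ v.2
  have hcocycle : ψ (T.d v) ∈ A.cocycles (n + 1 + 1) :=
    mem_cocycles.2 ⟨Graded.map_mem ψ (T.d_mem hvn), by rw [hdψ, T.d_sq, map_zero]⟩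
  have hsurj : ∀ t ∈ T.grading n, ∃ x ∈ A.grading n, φ.toFun x = t := fun t ht =>
    ⟨ψ t, Graded.map_mem ψ ht, (mem_sectionLocus.1 (hlocus
      (Algebra.adjoin_mono hn (SullivanAlgebra.grading_le_adjoin_genLE n ht)))).2⟩
  obtain ⟨s, hs, hds, hφs⟩ := hφ.exists_lift hsurj hvn hcocycle hφψ
  obtain ⟨q, hpq, hdom, hqv⟩ := p.exists_extend_generator hvp ⟨s, hs⟩
  refine ⟨q, hpq, fun χ hχ => ?_, ?_⟩
  · rw [hdom, sup_le_iff, Submodule.span_singleton_le_iff_mem]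
    refine ⟨hp χ (hχ.of_le hpq), mem_sectionLocus.2 ?_⟩
    rw [hqv χ hχ, ← hψ.eq_of_mem_adjoin (hχ.of_le hpq) hdv]
    exact ⟨hds, hφs⟩
  · exact hdom ▸ Submodule.mem_sup_right (Submodule.mem_span_singleton_self _)

end IsPartialSection

theorem MinimalSullivanAlgebra.exists_section (T : MinimalSullivanAlgebra) {A : CDGA}
    {φ : Hom A T.toCDGA} (hφ : QuasiIso φ) :
    ∃ ψ : Hom T.toCDGA A, ∀ t, φ.toFun (ψ.toFun t) = t := by
  obtain ⟨p, -, hp, hmax⟩ := zorn_le_nonempty₀ {p | IsPartialSection φ p}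
    (fun _ hc hchain q hq => IsPartialSection.exists_upperBound ⟨q, hq⟩ hchain.directedOn hc)
    ⊥ (IsPartialSection.bot φ)
  have hVtot : T.Vtot ≤ p.domain := Vtot_le_of_forall_d_mem_adjoin fun n hn v hv hdv => by
    obtain ⟨q, hpq, hq, hvq⟩ := hp.exists_le_mem_domain hφ hn hv hdv
    exact (hmax hq hpq).antisymm hpq ▸ hvq
  obtain ⟨ψ, hψ⟩ := p.exists_isExtension
  have hlocus : ∀ t, t ∈ sectionLocus φ ψ := fun t =>
    hp.adjoin_le_sectionLocus hψ (Algebra.adjoin_mono hVtot (T.gen ▸ Algebra.mem_top))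
  exact ⟨⟨ψ.toRingHom, map_smul ψ, fun i x hx => Graded.map_mem ψ hx,
    fun t => (hlocus t).1.symm⟩, fun t => (hlocus t).2⟩

/-! ## STATEMENT 1

Every quasi-isomorphism between minimal Sullivan algebras is an isomorphism of
cdga's. -/
theorem statement_1 (S T : MinimalSullivanAlgebra)
    (φ : CDGA.Hom S.toCDGA T.toCDGA) (h : CDGA.QuasiIso φ) :
    CDGA.IsIso φ := by
  obtain ⟨ψ, hφψ⟩ := T.exists_section h
  obtain ⟨χ, hψχ⟩ := S.exists_section (h.of_rightInverse hφψ)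
  refine ⟨ψ, fun x => ?_, hφψ⟩
  rw [← hψχ x, hφψ]
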